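/- Let D ∈ ℝ^{m×m} be the first-order difference matrix (D_{ii} = 1, D_{i,i−1} = −1, all other entries 0), let r ≥ 1 be an integer, and let D^{−r} = U S Vᵀ be a singular value decomposition with singular values σ₁ ≥ σ₂ ≥ … ≥ σ_m, and V_l the first l columns of V. Then for every matrix M ∈ ℂ^{m×k} and every h ∈ ℂ^k, ‖D^{−r} M h‖₂ ≥ σ_l · σ_min(V_lᵀ M) · ‖h‖₂. -/

import Mathlib

open Matrix Finset

noncomputable def l2norm {n : Type*} [Fintype n] (v : n → ℂ) : ℝ :=
  Real.sqrt (∑ i, Complex.normSq (v i))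

noncomputable def l2normR {n : Type*} [Fintype n] (v : n → ℝ) : ℝ :=
  Real.sqrt (∑ i, (v i) ^ 2)

/-- Smallest singular value of a matrix, as the infimum of `‖M x‖₂` over unit vectors `x`. -/
noncomputable def sigmaMin {m n : Type*} [Fintype m] [Fintype n] (M : Matrix m n ℂ) : ℝ :=
  sInf {t : ℝ | ∃ x : n → ℂ, l2norm x = 1 ∧ t = l2norm (M.mulVec x)}

/-- Largest singular value (= spectral norm) of a matrix. -/
noncomputable def sigmaMax {m n : Type*} [Fintype m] [Fintype n] (M : Matrix m n ℂ) : ℝ :=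
  sSup {t : ℝ | ∃ x : n → ℂ, l2norm x = 1 ∧ t = l2norm (M.mulVec x)}

/-- Probability of an event under the uniform distribution on a finite type. -/
noncomputable def unifProb {α : Type*} [Fintype α] (P : α → Prop) : ℝ :=
  (Nat.card {a : α // P a} : ℝ) / (Fintype.card α : ℝ)

/-- Expectation of a real random variable under the uniform distribution on a finite type. -/
noncomputable def unifExp {α : Type*} [Fintype α] (f : α → ℝ) : ℝ :=
  (∑ a, f a) / (Fintype.card α : ℝ)

/-- The first-order difference matrix. -/
def Dmat (m : ℕ) : Matrix (Fin m) (Fin m) ℝ :=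
  Matrix.of fun i j => if i = j then 1 else if (j : ℕ) + 1 = (i : ℕ) then -1 else 0

noncomputable def DmatC (m : ℕ) : Matrix (Fin m) (Fin m) ℂ := (Dmat m).map Complex.ofReal

/-- The harmonic frame with frequencies `ω`. -/
noncomputable def harmonicFrame (N k : ℕ) (ω : Fin k → Fin N) : Matrix (Fin N) (Fin k) ℂ :=
  Matrix.of fun j t => Complex.exp (2 * Real.pi * Complex.I * ((ω t : ℕ) : ℂ) * ((j : ℕ) : ℂ) / N)

/-- The (unnormalized) DFT matrix. -/
noncomputable def dftMatrix (N : ℕ) : Matrix (Fin N) (Fin N) ℂ :=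
  Matrix.of fun j t => Complex.exp (2 * Real.pi * Complex.I * ((j : ℕ) : ℂ) * ((t : ℕ) : ℂ) / N)

/-- Rounding to the nearest point of the lattice `δℤ + iδℤ`. -/
noncomputable def roundLattice (δ : ℝ) (c : ℂ) : ℂ :=
  ⟨δ * ((round (c.re / δ) : ℤ) : ℝ), δ * ((round (c.im / δ) : ℤ) : ℝ)⟩

/-- State variables `u_i` of the `r`-th order ΣΔ quantizer with step `δ` run on input `y`
(with `y` indexed from time `1`; `u` at times `≤ 0` equals `0`). -/
noncomputable def sdState (δ : ℝ) (r : ℕ) (y : ℕ → ℂ) : ℕ → ℂ := fun n =>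
  Nat.strongRecOn n (fun i ih =>
    if hi : i = 0 then 0
    else
      let w := y i + ∑ j ∈ Finset.Icc 1 r, ((-1 : ℂ)) ^ (j - 1) * (r.choose j : ℂ) *
        (if h : 1 ≤ j then ih (i - j) (Nat.sub_lt (Nat.pos_of_ne_zero hi) h) else 0)
      w - roundLattice δ w)

/-- Output `q_i` of the `r`-th order ΣΔ quantizer. -/
noncomputable def sdQ (δ : ℝ) (r : ℕ) (y : ℕ → ℂ) (i : ℕ) : ℂ :=
  roundLattice δ (y i + ∑ j ∈ Finset.Icc 1 r, ((-1 : ℂ)) ^ (j - 1) * (r.choose j : ℂ) *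
    sdState δ r y (i - j))

/-- Extension of a finite sequence `y : Fin m → ℂ` to time indices `1, …, m` (zero elsewhere). -/
def yExt {m : ℕ} (y : Fin m → ℂ) : ℕ → ℂ := fun i =>
  if h : 1 ≤ i ∧ i ≤ m then y ⟨i - 1, by omega⟩ else 0

/-- The `r`-th order ΣΔ quantization of a finite sequence of complex measurements. -/
noncomputable def sdQuant (δ : ℝ) (r : ℕ) {m : ℕ} (y : Fin m → ℂ) : Fin m → ℂ :=
  fun i => sdQ δ r (yExt y) ((i : ℕ) + 1)

/-- Rounding to the nearest point of `δℤ`. -/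
noncomputable def roundR (δ : ℝ) (x : ℝ) : ℝ := δ * ((round (x / δ) : ℤ) : ℝ)

noncomputable def sdStateR (δ : ℝ) (r : ℕ) (y : ℕ → ℝ) : ℕ → ℝ := fun n =>
  Nat.strongRecOn n (fun i ih =>
    if hi : i = 0 then 0
    else
      let w := y i + ∑ j ∈ Finset.Icc 1 r, ((-1 : ℝ)) ^ (j - 1) * (r.choose j : ℝ) *
        (if h : 1 ≤ j then ih (i - j) (Nat.sub_lt (Nat.pos_of_ne_zero hi) h) else 0)
      w - roundR δ w)

noncomputable def sdQR (δ : ℝ) (r : ℕ) (y : ℕ → ℝ) (i : ℕ) : ℝ :=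
  roundR δ (y i + ∑ j ∈ Finset.Icc 1 r, ((-1 : ℝ)) ^ (j - 1) * (r.choose j : ℝ) *
    sdStateR δ r y (i - j))

def yExtR {m : ℕ} (y : Fin m → ℝ) : ℕ → ℝ := fun i =>
  if h : 1 ≤ i ∧ i ≤ m then y ⟨i - 1, by omega⟩ else 0

/-- The `r`-th order ΣΔ quantization of a finite sequence of real measurements. -/
noncomputable def sdQuantR (δ : ℝ) (r : ℕ) {m : ℕ} (y : Fin m → ℝ) : Fin m → ℝ :=
  fun i => sdQR δ r (yExtR y) ((i : ℕ) + 1)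

/-!
The isometry `U` drops out, so `‖D^{-r} M h‖₂ = ‖S Vᵀ M h‖₂`. Discarding all but the first `l`
coordinates only decreases this norm, and on those coordinates `S` scales by at least `σ_l`. What
remains is `σ_l ‖V_lᵀ M h‖₂`, which `sigmaMin` bounds below by homogeneity.
-/

lemma l2norm_eq_norm_toLp {n : Type*} [Fintype n] (v : n → ℂ) : l2norm v = ‖WithLp.toLp 2 v‖ := by
  simp only [l2norm, EuclideanSpace.norm_eq, Complex.normSq_eq_norm_sq]

lemma l2norm_nonneg {n : Type*} [Fintype n] (v : n → ℂ) : 0 ≤ l2norm v :=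
  Real.sqrt_nonneg _

lemma l2norm_smul {n : Type*} [Fintype n] (c : ℂ) (v : n → ℂ) :
    l2norm (c • v) = ‖c‖ * l2norm v := by
  simp only [l2norm_eq_norm_toLp, WithLp.toLp_smul, norm_smul]

lemma sigmaMin_mul_l2norm_le {m n : Type*} [Fintype m] [Fintype n] (A : Matrix m n ℂ)
    (x : n → ℂ) : sigmaMin A * l2norm x ≤ l2norm (A *ᵥ x) := by
  rcases (l2norm_nonneg x).eq_or_lt with hx | hx
  · rw [← hx, mul_zero]
    exact l2norm_nonneg _
  have norm_scalar : ‖((l2norm x)⁻¹ : ℂ)‖ = (l2norm x)⁻¹ := by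
    rw [norm_inv, Complex.norm_of_nonneg hx.le]
  rw [← le_div_iff₀ hx]
  refine csInf_le ⟨0, ?_⟩ ⟨((l2norm x)⁻¹ : ℂ) • x, ?_, ?_⟩
  · rintro _ ⟨y, -, rfl⟩
    exact l2norm_nonneg _
  · rw [l2norm_smul, norm_scalar, inv_mul_cancel₀ hx.ne']
  · rw [mulVec_smul, l2norm_smul, norm_scalar, div_eq_inv_mul]

lemma l2norm_mulVec_of_conjTranspose_mul_self_eq_one {m n : Type*} [Fintype m] [Fintype n]
    [DecidableEq n] {U : Matrix m n ℂ} (hU : Uᴴ * U = 1) (v : n → ℂ) :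
    l2norm (U *ᵥ v) = l2norm v := by
  have dotProduct_preserved : star (U *ᵥ v) ⬝ᵥ (U *ᵥ v) = star v ⬝ᵥ v := by
    rw [star_mulVec, dotProduct_mulVec, vecMul_vecMul, hU, vecMul_one]
  simp only [l2norm_eq_norm_toLp, @norm_eq_sqrt_re_inner ℂ,
    EuclideanSpace.inner_eq_star_dotProduct, dotProduct_comm _ (star _),
    dotProduct_preserved]

lemma mul_l2norm_comp_le_l2norm_mul {ι n : Type*} [Fintype ι] [Fintype n] {e : ι → n}
    (he : Function.Injective e) {c : ℝ} (hc : 0 ≤ c) {s : n → ℂ} (hs : ∀ i, c ≤ ‖s (e i)‖)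
    (z : n → ℂ) : c * l2norm (z ∘ e) ≤ l2norm (s * z) := by
  classical
  have term_le (i : ι) : c ^ 2 * ‖z (e i)‖ ^ 2 ≤ ‖s (e i) * z (e i)‖ ^ 2 := by
    rw [norm_mul, mul_pow]
    gcongr
    exact hs i
  rw [← Real.sqrt_sq hc]
  simp only [l2norm, Complex.normSq_eq_norm_sq, Pi.mul_apply, Function.comp_apply]
  rw [← Real.sqrt_mul (sq_nonneg c), Finset.mul_sum]
  apply Real.sqrt_le_sqrt
  calc ∑ i, c ^ 2 * ‖z (e i)‖ ^ 2
      ≤ ∑ i, ‖s (e i) * z (e i)‖ ^ 2 := Finset.sum_le_sum fun i _ => term_le i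
    _ = ∑ j ∈ univ.image e, ‖s j * z j‖ ^ 2 := by rw [Finset.sum_image he.injOn]
    _ ≤ ∑ j, ‖s j * z j‖ ^ 2 := Finset.sum_le_univ_sum_of_nonneg fun j => sq_nonneg _

lemma map_ofReal_mul {m n p : Type*} [Fintype n] (A : Matrix m n ℝ) (B : Matrix n p ℝ) :
    (A * B).map Complex.ofReal = A.map Complex.ofReal * B.map Complex.ofReal :=
  Matrix.map_mul (f := Complex.ofRealHom)

lemma conjTranspose_map_ofReal {m n : Type*} (A : Matrix m n ℝ) :
    (A.map Complex.ofReal)ᴴ = Aᵀ.map Complex.ofReal := by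
  rw [← conjTranspose_eq_transpose_of_trivial A, conjTranspose_map]
  exact fun x => (Complex.conj_ofReal x).symm

lemma conjTranspose_mul_self_map_ofReal_eq_one {m n : Type*} [Fintype m] [DecidableEq n]
    {A : Matrix m n ℝ} (hA : Aᵀ * A = 1) :
    (A.map Complex.ofReal)ᴴ * A.map Complex.ofReal = 1 := by
  rw [conjTranspose_map_ofReal, ← map_ofReal_mul, hA,
    Matrix.map_one _ Complex.ofReal_zero Complex.ofReal_one]

theorem stmt16_general {p q n ι κ : Type*} [Fintype p] [Fintype q] [Fintype n] [DecidableEq n]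
    [Fintype ι] [Fintype κ] {U : Matrix p n ℂ} (hU : Uᴴ * U = 1) {S : Matrix n n ℂ}
    (hS : S.IsDiag) (W : Matrix n q ℂ) {e : ι → n} (he : Function.Injective e) {c : ℝ}
    (hc : 0 ≤ c) (hSc : ∀ i, c ≤ ‖S (e i) (e i)‖) (M : Matrix q κ ℂ) (h : κ → ℂ) :
    c * sigmaMin (W.submatrix e id * M) * l2norm h ≤ l2norm ((U * S * W * M) *ᵥ h) := by
  have mulVec_eq_diag_mul (z : n → ℂ) : S *ᵥ z = S.diag * z := by
    ext i
    rw [← hS.diagonal_diag, mulVec_diagonal, diag_diagonal, Pi.mul_apply]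
  calc c * sigmaMin (W.submatrix e id * M) * l2norm h
      = c * (sigmaMin (W.submatrix e id * M) * l2norm h) := mul_assoc _ _ _
    _ ≤ c * l2norm ((W.submatrix e id * M) *ᵥ h) := by
        gcongr
        exact sigmaMin_mul_l2norm_le _ h
    _ = c * l2norm (((W * M) *ᵥ h) ∘ e) := rfl
    _ ≤ l2norm (S.diag * (W * M) *ᵥ h) := mul_l2norm_comp_le_l2norm_mul he hc hSc _
    _ = l2norm (U *ᵥ S *ᵥ (W * M) *ᵥ h) := by
        rw [l2norm_mulVec_of_conjTranspose_mul_self_eq_one hU, mulVec_eq_diag_mul]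
    _ = l2norm ((U * S * W * M) *ᵥ h) := by simp only [mulVec_mulVec, Matrix.mul_assoc]

/-- the deterministic lower bound
`‖D^{-r} M h‖₂ ≥ σ_l · σ_min(V_lᵀ M) · ‖h‖₂`, for any SVD `D^{-r} = U S Vᵀ` with decreasing
singular values, `V_l` the first `l` columns of `V` and `σ_l` the `l`-th singular value. -/
theorem stmt16 (m k l r : ℕ) (hr : 1 ≤ r) (hl : 1 ≤ l) (hlm : l ≤ m)
    (U S V : Matrix (Fin m) (Fin m) ℝ)
    (hU : Uᵀ * U = 1) (hV : Vᵀ * V = 1)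
    (hSdiag : ∀ i j : Fin m, i ≠ j → S i j = 0)
    (hSnn : ∀ i : Fin m, 0 ≤ S i i)
    (hSdec : ∀ i j : Fin m, i ≤ j → S j j ≤ S i i)
    (hSVD : ((Dmat m)⁻¹) ^ r = U * S * Vᵀ)
    (M : Matrix (Fin m) (Fin k) ℂ) (h : Fin k → ℂ) :
    S ⟨l - 1, by omega⟩ ⟨l - 1, by omega⟩ *
        sigmaMin ((((V.submatrix id (Fin.castLE hlm)).transpose).map Complex.ofReal) * M) *
        l2norm h ≤
      l2norm (((((Dmat m)⁻¹ ^ r).map Complex.ofReal) * M).mulVec h) := by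
  rw [hSVD, map_ofReal_mul, map_ofReal_mul]
  exact stmt16_general (conjTranspose_mul_self_map_ofReal_eq_one hU)
    (IsDiag.map hSdiag Complex.ofReal_zero) (Vᵀ.map Complex.ofReal) (Fin.castLE_injective hlm)
    (hSnn _) (fun i => (hSdec _ _ (Nat.le_sub_one_of_lt i.isLt)).trans_eq
      (Complex.norm_of_nonneg (hSnn _)).symm) M h
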